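/- arXiv:1902.08162 — 3 statements merged into one kernel-verified Lean document; each statement's English description precedes it below -/
import Mathlib

section
/- For every x in [-1,1], 2 times the integral over s in (-1,1) of log|x-s| · (1/π) sqrt((1-s)/(1+s)) ds equals 2(x+1) - (2 + 2 log 2). (Equivalently, the measure with density (1/π) sqrt((1-s)/(1+s)) on [-1,1] is the equilibrium measure for the Laguerre-type potential V(x) = 2(x+1), with Euler–Lagrange constant ℓ = 2 + 2 log 2.) -/
open MeasureTheory Filter Set

lemma lag_int (c a b : ℝ) :
    IntervalIntegrable (fun t : ℝ => Real.log (Real.sin ((t + c) / 2))) volume a b := by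
  have h : AnalyticOnNhd ℝ (fun t : ℝ => Real.sin ((t + c) / 2)) (uIcc a b) := by
    intro t _
    have h1 : AnalyticAt ℝ (fun t : ℝ => (t + c) / 2) t := by fun_prop
    exact (Real.analyticAt_sin).fun_comp h1
  exact h.meromorphicOn.intervalIntegrable_log

lemma lag_int' (a b : ℝ) :
    IntervalIntegrable (fun t : ℝ => Real.log (Real.sin (t / 2))) volume a b := by
  simpa using lag_int 0 a b

lemma lag_one : ∫ t in (0 : ℝ)..(2 * Real.pi), Real.log (Real.sin (t / 2))
    = -(2 * Real.pi * Real.log 2) := by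
  rw [intervalIntegral.integral_comp_div (fun t => Real.log (Real.sin t)) (two_ne_zero)]
  rw [zero_div, mul_div_cancel_left₀ _ (two_ne_zero), integral_log_sin_zero_pi, smul_eq_mul]
  ring

lemma lag_half_pos {t : ℝ} (ht : t ∈ Ioo (0 : ℝ) (2 * Real.pi)) : 0 < Real.sin (t / 2) :=
  Real.sin_pos_of_pos_of_lt_pi (by linarith [ht.1]) (by linarith [ht.2])

lemma lag_half_deriv (t : ℝ) :
    HasDerivAt (fun t : ℝ => Real.sin (t / 2)) (Real.cos (t / 2) * (1 / 2)) t :=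
  ((hasDerivAt_id t).div_const 2).sin

lemma lag_half_deriv' (t : ℝ) :
    HasDerivAt (fun t : ℝ => Real.cos (t / 2)) (-Real.sin (t / 2) * (1 / 2)) t :=
  ((hasDerivAt_id t).div_const 2).cos

lemma lag_cos_half (t : ℝ) : Real.cos t = 1 - 2 * Real.sin (t / 2) ^ 2 := by
  have h := Real.cos_sq' (t / 2)
  have h2 := Real.cos_two_mul (t / 2)
  rw [mul_div_cancel₀ _ (two_ne_zero)] at h2
  rw [h2, h]; ring

lemma lag_sin_half (t : ℝ) : Real.sin t = 2 * Real.sin (t / 2) * Real.cos (t / 2) := by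
  have h2 := Real.sin_two_mul (t / 2)
  rwa [mul_div_cancel₀ _ (two_ne_zero)] at h2

lemma lag_cos : ∫ t in (0 : ℝ)..(2 * Real.pi), Real.log (Real.sin (t / 2)) * Real.cos t
    = -Real.pi := by
  have key := intervalIntegral.integral_eq_sub_of_hasDerivAt_of_le (a := 0) (b := 2 * Real.pi)
    (f := fun t => 2 * Real.cos (t / 2) * (Real.sin (t / 2) * Real.log (Real.sin (t / 2)))
      - t / 2 - Real.sin (t / 2) * Real.cos (t / 2))
    (f' := fun t => Real.log (Real.sin (t / 2)) * Real.cos t) (by positivity) ?_ ?_ ?_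
  · rw [key]
    simp
  · have := Real.continuous_mul_log.comp (f := fun t : ℝ => Real.sin (t / 2)) (by fun_prop)
    have h2 : Continuous fun t : ℝ => Real.sin (t / 2) * Real.log (Real.sin (t / 2)) := this
    apply Continuous.continuousOn
    fun_prop
  · intro t ht
    have hp := lag_half_pos ht
    have hs := lag_half_deriv t
    have hc := lag_half_deriv' t
    have := (((hc.const_mul 2).mul (hs.mul (hs.log hp.ne'))).sub
      ((hasDerivAt_id t).div_const 2)).sub (hs.mul hc)
    refine this.congr_deriv ?_
    have e := Real.sin_sq_add_cos_sq (t / 2)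
    rw [lag_cos_half t]
    simp only [Pi.mul_apply]
    field_simp
    have e' : Real.cos (t / 2) ^ 2 = 1 - Real.sin (t / 2) ^ 2 := by linarith
    ring_nf at e' ⊢
    rw [e']
    ring
  · exact (lag_int' _ _).mul_continuousOn (by fun_prop)

lemma lag_sin : ∫ t in (0 : ℝ)..(2 * Real.pi), Real.log (Real.sin (t / 2)) * Real.sin t
    = 0 := by
  have key := intervalIntegral.integral_eq_sub_of_hasDerivAt_of_le (a := 0) (b := 2 * Real.pi)
    (f := fun t => 2 * Real.sin (t / 2) * (Real.sin (t / 2) * Real.log (Real.sin (t / 2)))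
      - Real.sin (t / 2) * Real.sin (t / 2))
    (f' := fun t => Real.log (Real.sin (t / 2)) * Real.sin t) (by positivity) ?_ ?_ ?_
  · rw [key]
    simp
  · have := Real.continuous_mul_log.comp (f := fun t : ℝ => Real.sin (t / 2)) (by fun_prop)
    have h2 : Continuous fun t : ℝ => Real.sin (t / 2) * Real.log (Real.sin (t / 2)) := this
    apply Continuous.continuousOn
    fun_prop
  · intro t ht
    have hp := lag_half_pos ht
    have hs := lag_half_deriv t
    have := ((hs.const_mul 2).mul (hs.mul (hs.log hp.ne'))).sub (hs.mul hs)
    refine this.congr_deriv ?_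
    rw [lag_sin_half t]
    simp only [Pi.mul_apply]
    field_simp
    ring
  · exact (lag_int' _ _).mul_continuousOn (by fun_prop)

lemma lag_shift (φ : ℝ) : ∫ t in (-Real.pi)..Real.pi,
    Real.log (Real.sin ((t + φ) / 2)) * (1 - Real.cos t)
    = -(2 * Real.pi * Real.log 2) + Real.pi * Real.cos φ := by
  have h1 := intervalIntegral.integral_comp_add_right (a := -Real.pi) (b := Real.pi)
    (fun u => Real.log (Real.sin (u / 2)) * (1 - Real.cos (u - φ))) φ
  simp only [add_sub_cancel_right] at h1
  rw [h1]
  have hper : Function.Periodic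
      (fun u => Real.log (Real.sin (u / 2)) * (1 - Real.cos (u - φ))) (2 * Real.pi) := by
    intro u
    have e1 : (u + 2 * Real.pi) / 2 = u / 2 + Real.pi := by ring
    have e2 : u + 2 * Real.pi - φ = u - φ + 2 * Real.pi := by ring
    simp only [e1, e2, Real.sin_add_pi, Real.cos_add_two_pi, Real.log_neg_eq_log]
  have h2 := hper.intervalIntegral_add_eq (-Real.pi + φ) 0
  rw [show -Real.pi + φ + 2 * Real.pi = Real.pi + φ by ring, zero_add] at h2
  rw [h2]
  have i1 := lag_int' 0 (2 * Real.pi)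
  have i2 : IntervalIntegrable (fun t : ℝ => Real.cos φ * (Real.log (Real.sin (t / 2)) * Real.cos t))
      volume 0 (2 * Real.pi) := (i1.mul_continuousOn (by fun_prop)).const_mul _
  have i3 : IntervalIntegrable (fun t : ℝ => Real.sin φ * (Real.log (Real.sin (t / 2)) * Real.sin t))
      volume 0 (2 * Real.pi) := (i1.mul_continuousOn (by fun_prop)).const_mul _
  have e : ∀ u : ℝ, Real.log (Real.sin (u / 2)) * (1 - Real.cos (u - φ))
      = Real.log (Real.sin (u / 2)) - Real.cos φ * (Real.log (Real.sin (u / 2)) * Real.cos u)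
        - Real.sin φ * (Real.log (Real.sin (u / 2)) * Real.sin u) := by
    intro u; rw [Real.cos_sub]; ring
  simp only [e]
  rw [intervalIntegral.integral_sub (i1.sub i2) i3, intervalIntegral.integral_sub i1 i2,
    intervalIntegral.integral_const_mul, intervalIntegral.integral_const_mul, lag_one, lag_cos,
    lag_sin]
  ring

lemma lag_main (φ : ℝ) (hφ : φ ∈ Icc 0 Real.pi) :
    ∫ t in (0 : ℝ)..Real.pi, Real.log |Real.cos φ - Real.cos t| * (1 - Real.cos t)
    = Real.pi * Real.cos φ - Real.pi * Real.log 2 := by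
  have j1 : ∀ c a b : ℝ, IntervalIntegrable
      (fun t : ℝ => Real.log (Real.sin ((t + c) / 2)) * (1 - Real.cos t)) volume a b :=
    fun c a b => (lag_int c a b).mul_continuousOn (by fun_prop)
  have j0 : IntervalIntegrable (fun t : ℝ => Real.log 2 * (1 - Real.cos t)) volume 0 Real.pi :=
    Continuous.intervalIntegrable (by fun_prop) _ _
  have h1 : ∫ t in (0 : ℝ)..Real.pi, Real.log |Real.cos φ - Real.cos t| * (1 - Real.cos t)
      = ∫ t in (0 : ℝ)..Real.pi, (Real.log 2 * (1 - Real.cos t)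
        + Real.log (Real.sin ((t + φ) / 2)) * (1 - Real.cos t)
        + Real.log (Real.sin ((t + -φ) / 2)) * (1 - Real.cos t)) := by
    apply intervalIntegral.integral_congr_ae
    have : ∀ᵐ t : ℝ, t ≠ φ := by simp [ae_iff]
    filter_upwards [this] with t ht htm
    rw [uIoc_of_le Real.pi_pos.le] at htm
    have hne : Real.cos φ - Real.cos t ≠ 0 := by
      intro h
      exact ht (Real.injOn_cos ⟨htm.1.le, htm.2⟩ hφ (by linarith))
    have e : Real.cos φ - Real.cos t
        = 2 * Real.sin ((t + φ) / 2) * Real.sin ((t + -φ) / 2) := by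
      rw [Real.cos_sub_cos, show (φ - t) / 2 = -((t + -φ) / 2) by ring, Real.sin_neg,
        add_comm φ t]
      ring
    rw [e] at hne
    have a1 : Real.sin ((t + φ) / 2) ≠ 0 := by rintro h; simp [h] at hne
    have a2 : Real.sin ((t + -φ) / 2) ≠ 0 := by rintro h; simp [h] at hne
    rw [Real.log_abs, e, Real.log_mul (mul_ne_zero two_ne_zero a1) a2,
      Real.log_mul two_ne_zero a1]
    ring
  have h2 : ∫ t in (0 : ℝ)..Real.pi, Real.log (Real.sin ((t + -φ) / 2)) * (1 - Real.cos t)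
      = ∫ t in (-Real.pi)..0, Real.log (Real.sin ((t + φ) / 2)) * (1 - Real.cos t) := by
    have := intervalIntegral.integral_comp_neg (a := 0) (b := Real.pi)
      (fun t => Real.log (Real.sin ((t + φ) / 2)) * (1 - Real.cos t))
    rw [neg_zero] at this
    rw [← this]
    congr 1
    ext t
    rw [show (-t + φ) / 2 = -((t + -φ) / 2) by ring, Real.sin_neg, Real.log_neg_eq_log,
      Real.cos_neg]
  have h3 := intervalIntegral.integral_add_adjacent_intervals (j1 φ (-Real.pi) 0) (j1 φ 0 Real.pi)
  rw [lag_shift] at h3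
  have h0 : ∫ t in (0 : ℝ)..Real.pi, Real.log 2 * (1 - Real.cos t) = Real.pi * Real.log 2 := by
    rw [intervalIntegral.integral_const_mul, intervalIntegral.integral_sub
      (by simp) (Continuous.intervalIntegrable (by fun_prop) _ _)]
    simp [mul_comm]
  rw [h1, intervalIntegral.integral_add (j0.add (j1 _ _ _)) (j1 _ _ _),
    intervalIntegral.integral_add j0 (j1 _ _ _), h2, h0]
  linarith

lemma lag_image : Real.cos '' Ioo 0 Real.pi = Ioo (-1) 1 := by
  apply Subset.antisymm
  · exact Real.mapsTo_cos_Ioo.image_subset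
  · intro s hs
    refine ⟨Real.arccos s, ⟨Real.arccos_pos.2 hs.2, ?_⟩, Real.cos_arccos hs.1.le hs.2.le⟩
    refine lt_of_le_of_ne (Real.arccos_le_pi s) ?_
    intro h
    rw [Real.arccos_eq_pi] at h
    linarith [hs.1]

/-- The measure with density `(1/π) sqrt((1-s)/(1+s))` on `[-1,1]` is the
equilibrium measure for the Laguerre-type potential `V(x) = 2(x+1)`: for every
`x ∈ [-1,1]`, `2 ∫ log|x-s| dμ(s) = V(x) - ℓ` with `ℓ = 2 + 2 log 2`. -/
theorem laguerre_equilibrium_equality (x : ℝ) (hx : x ∈ Set.Icc (-1 : ℝ) 1) :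
    2 * ∫ s in Set.Ioo (-1 : ℝ) 1,
        Real.log |x - s| * ((1 / Real.pi) * Real.sqrt ((1 - s) / (1 + s)))
      = 2 * (x + 1) - (2 + 2 * Real.log 2) := by
  obtain ⟨φ, hφ, rfl⟩ := Real.surjOn_cos hx
  rw [← lag_image, integral_image_eq_integral_abs_deriv_smul (f' := fun t => -Real.sin t)
    measurableSet_Ioo (fun t _ => (Real.hasDerivAt_cos t).hasDerivWithinAt)
    (Real.injOn_cos.mono Ioo_subset_Icc_self)]
  have h : ∫ t in Ioo 0 Real.pi, |-Real.sin t| • (Real.log |Real.cos φ - Real.cos t|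
        * ((1 / Real.pi) * Real.sqrt ((1 - Real.cos t) / (1 + Real.cos t))))
      = ∫ t in Ioo 0 Real.pi, (1 / Real.pi) *
        (Real.log |Real.cos φ - Real.cos t| * (1 - Real.cos t)) := by
    apply setIntegral_congr_fun measurableSet_Ioo
    intro t ht
    have hs := Real.sin_pos_of_mem_Ioo ht
    have hc := Real.mapsTo_cos_Ioo ht
    have h1 : 0 < 1 + Real.cos t := by linarith [hc.1]
    have h2 : 0 < 1 - Real.cos t := by linarith [hc.2]
    have e : Real.sin t * Real.sqrt ((1 - Real.cos t) / (1 + Real.cos t)) = 1 - Real.cos t := by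
      have : (1 - Real.cos t) / (1 + Real.cos t) = ((1 - Real.cos t) / Real.sin t) ^ 2 := by
        have := Real.sin_sq_add_cos_sq t
        rw [div_pow, div_eq_div_iff h1.ne' (by positivity)]
        have e' : Real.sin t ^ 2 = 1 - Real.cos t ^ 2 := by linarith
        rw [e']; ring
      rw [this, Real.sqrt_sq (by positivity)]
      field_simp
    simp only [abs_neg, abs_of_pos hs, smul_eq_mul]
    linear_combination (Real.log |Real.cos φ - Real.cos t| * (1 / Real.pi)) * e
  rw [h, integral_const_mul, ← integral_Ioc_eq_integral_Ioo,
    ← intervalIntegral.integral_of_le Real.pi_pos.le, lag_main φ hφ]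
  have := Real.pi_ne_zero
  field_simp
  ring
end

section
/- Let V be a real-valued continuously differentiable function on a neighborhood of [-1,1] and suppose ρ is a continuous probability density on [-1,1] such that for all z in ℂ \ [-1,1], 2π sqrt(z-1) sqrt(z+1) ∫_{-1}^{1} ρ(x)/(x-z) dx + ∫_{-1}^{1} V'(x) sqrt(1-x^2)/(x-z) dx = -2π (with principal branches of the square roots). Then for every t in (-1,1), the principal value integral ⨍_{-1}^{1} V'(x) sqrt(1-x^2)/(x-t) dx equals -2π + 2π^2 sqrt(1-t^2) ρ(t). -/
open MeasureTheory Filter Set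

lemma pvAux_approxId (G K : ℝ → ℝ) (t M : ℝ) (hG : Measurable G) (hM : ∀ x, |G x| ≤ M)
    (hc : ContinuousAt G t) (hK : Integrable K) :
    Tendsto (fun ε : ℝ => ∫ x, G x * (ε⁻¹ * K ((x - t) / ε))) (nhdsWithin 0 (Set.Ioi 0))
      (nhds (G t * ∫ v, K v)) := by
  have h1 : Tendsto (fun ε : ℝ => ∫ v, G (t + ε * v) * K v) (nhdsWithin 0 (Set.Ioi 0))
      (nhds (∫ v, G t * K v)) := by
    apply tendsto_integral_filter_of_dominated_convergence (fun v => M * |K v|)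
    · refine Eventually.of_forall fun ε => ?_
      exact (Measurable.aestronglyMeasurable (by fun_prop)).mul hK.aestronglyMeasurable
    · refine Eventually.of_forall fun ε => Eventually.of_forall fun v => ?_
      rw [Real.norm_eq_abs, abs_mul]
      exact mul_le_mul_of_nonneg_right (hM _) (abs_nonneg _)
    · exact hK.abs.const_mul M
    · refine Eventually.of_forall fun v => ?_
      apply Tendsto.mul_const
      have : Tendsto (fun ε : ℝ => t + ε * v) (nhdsWithin 0 (Set.Ioi 0)) (nhds t) := by
        have h : Continuous (fun ε : ℝ => t + ε * v) := by fun_prop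
        have h2 := h.tendsto 0
        simp only [zero_mul, add_zero] at h2
        exact h2.mono_left nhdsWithin_le_nhds
      exact hc.tendsto.comp this
  rw [integral_const_mul] at h1
  refine h1.congr' ?_
  filter_upwards [self_mem_nhdsWithin] with ε hε
  have hε : (0 : ℝ) < ε := hε
  have e1 : ∫ x, G x * (ε⁻¹ * K ((x - t) / ε)) = ∫ x, G (x + t) * (ε⁻¹ * K (x / ε)) := by
    rw [← integral_add_right_eq_self (fun x => G x * (ε⁻¹ * K ((x - t) / ε))) t]
    simp
  have e2 := Measure.integral_comp_mul_left (fun x => G (x + t) * (ε⁻¹ * K (x / ε))) ε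
  rw [abs_of_pos (inv_pos.2 hε), smul_eq_mul] at e2
  rw [e1]
  have e3 : ∫ x, G (x + t) * (ε⁻¹ * K (x / ε))
      = ε * ∫ x, G (ε * x + t) * (ε⁻¹ * K (ε * x / ε)) := by
    rw [e2]; field_simp
  rw [e3, ← integral_const_mul]
  congr 1
  ext v
  rw [mul_div_cancel_left₀ _ hε.ne', add_comm t]
  field_simp

/-- The difference kernel between the truncated and the smoothed Cauchy kernel. -/
noncomputable def pvAuxK (v : ℝ) : ℝ :=
  if |v| < 1 then -(v / (v ^ 2 + 1)) else v⁻¹ - v / (v ^ 2 + 1)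

lemma pvAuxK_integrable : Integrable pvAuxK := by
  refine integrable_inv_one_add_sq.mono' ?_ ?_
  · apply Measurable.aestronglyMeasurable
    unfold pvAuxK
    refine Measurable.ite (measurableSet_lt (by fun_prop) (by fun_prop)) (by fun_prop) (by fun_prop)
  · refine Eventually.of_forall fun v => ?_
    have hp : 0 < v ^ 2 + 1 := by positivity
    unfold pvAuxK
    rw [Real.norm_eq_abs]
    split_ifs with h
    · rw [abs_neg, abs_div, abs_of_pos hp, add_comm (1:ℝ), div_eq_mul_inv]
      exact mul_le_of_le_one_left (by positivity) h.le
    · have hv : v ≠ 0 := by rintro rfl; simp at h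
      have h' : 1 ≤ |v| := not_lt.1 h
      have : v⁻¹ - v / (v ^ 2 + 1) = v⁻¹ * (1 + v ^ 2)⁻¹ := by
        field_simp; ring
      rw [this, abs_mul, abs_inv, abs_of_pos (a := (1 + v ^ 2)⁻¹) (by positivity)]
      exact mul_le_of_le_one_left (by positivity) (inv_le_one_of_one_le₀ h')

lemma pvAuxK_integral : ∫ v, pvAuxK v = 0 := by
  have h := integral_neg_eq_self pvAuxK volume
  have h2 : ∀ v, pvAuxK (-v) = - pvAuxK v := by
    intro v
    unfold pvAuxK
    rw [abs_neg]
    split_ifs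
    · simp [neg_div]
    · rw [inv_neg, neg_sq, neg_div]; ring
  simp only [h2, integral_neg] at h
  linarith

lemma pvAux_data (g : ℝ → ℝ) (hg : ContinuousOn g (Set.Icc (-1 : ℝ) 1)) :
    Measurable ((Set.Ioo (-1 : ℝ) 1).indicator g) ∧
    (∃ M, ∀ x, |(Set.Ioo (-1 : ℝ) 1).indicator g x| ≤ M) ∧
    (∀ t ∈ Set.Ioo (-1 : ℝ) 1, ContinuousAt ((Set.Ioo (-1 : ℝ) 1).indicator g) t ∧
      (Set.Ioo (-1 : ℝ) 1).indicator g t = g t) := by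
  classical
  refine ⟨?_, ?_, ?_⟩
  · rw [← Set.piecewise_eq_indicator]
    exact (hg.mono Ioo_subset_Icc_self).measurable_piecewise continuousOn_const measurableSet_Ioo
  · obtain ⟨M, hM⟩ := isCompact_Icc.exists_bound_of_continuousOn hg
    refine ⟨max M 0, fun x => ?_⟩
    by_cases hx : x ∈ Set.Ioo (-1 : ℝ) 1
    · rw [indicator_of_mem hx]
      exact (hM x (Ioo_subset_Icc_self hx)).trans (le_max_left _ _)
    · rw [indicator_of_notMem hx]; simp
  · intro t ht
    refine ⟨?_, indicator_of_mem ht _⟩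
    have : ContinuousAt g t := hg.continuousAt (Icc_mem_nhds ht.1 ht.2)
    refine this.congr ?_
    filter_upwards [Ioo_mem_nhds ht.1 ht.2] with x hx
    rw [indicator_of_mem hx]

lemma pvAux_pos (u η : ℝ) (h : 0 < η) : 0 < u ^ 2 + η ^ 2 := by positivity

lemma pvAux_re_im (g : ℝ → ℝ) (hg : ContinuousOn g (Set.Icc (-1 : ℝ) 1)) (t η : ℝ) (hη : 0 < η) :
    (∫ x in Set.Ioo (-1 : ℝ) 1, (g x : ℂ) / ((x : ℂ) - (t + η * Complex.I))) =
      ((∫ x in Set.Ioo (-1 : ℝ) 1, g x * ((x - t) / ((x - t) ^ 2 + η ^ 2)) : ℝ) : ℂ) +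
      ((∫ x in Set.Ioo (-1 : ℝ) 1, g x * (η / ((x - t) ^ 2 + η ^ 2)) : ℝ) : ℂ) * Complex.I := by
  have hi : ∀ k : ℝ → ℝ, Continuous k → IntegrableOn (fun x => g x * k x) (Set.Ioo (-1 : ℝ) 1) := by
    intro k hk
    exact ((hg.mul hk.continuousOn).integrableOn_compact isCompact_Icc).mono_set Ioo_subset_Icc_self
  have hc1 : Continuous (fun x : ℝ => (x - t) / ((x - t) ^ 2 + η ^ 2)) := by
    refine Continuous.div (by fun_prop) (by fun_prop) fun x => (pvAux_pos _ _ hη).ne'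
  have hc2 : Continuous (fun x : ℝ => η / ((x - t) ^ 2 + η ^ 2)) := by
    refine Continuous.div (by fun_prop) (by fun_prop) fun x => (pvAux_pos _ _ hη).ne'
  rw [← integral_complex_ofReal, ← integral_complex_ofReal, ← integral_mul_const, ← integral_add]
  · congr 1
    ext x
    have hp := pvAux_pos (x - t) η hη
    have hne : ((x : ℂ) - (t + η * Complex.I)) ≠ 0 := by
      intro h
      have := congrArg Complex.im h
      simp at this
      exact hη.ne' this
    have hne2 : ((((x - t) ^ 2 + η ^ 2 : ℝ)) : ℂ) ≠ 0 := by exact_mod_cast hp.ne'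
    have key : (((x - t) ^ 2 + η ^ 2 : ℝ) : ℂ) =
        ((x : ℂ) - (t + η * Complex.I)) * ((x - t) + η * Complex.I) := by
      push_cast
      linear_combination ((η : ℂ) ^ 2) * Complex.I_sq
    rw [div_eq_iff hne]
    rw [Complex.ofReal_mul, Complex.ofReal_mul, Complex.ofReal_div, Complex.ofReal_div]
    field_simp
    rw [key]
    push_cast
    ring
  · exact (hi _ hc1).ofReal
  · exact (hi _ hc2).ofReal.mul_const _

lemma pvAux_poisson (g : ℝ → ℝ) (hg : ContinuousOn g (Set.Icc (-1 : ℝ) 1)) (t : ℝ)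
    (ht : t ∈ Set.Ioo (-1 : ℝ) 1) :
    Tendsto (fun η : ℝ => ∫ x in Set.Ioo (-1 : ℝ) 1, g x * (η / ((x - t) ^ 2 + η ^ 2)))
      (nhdsWithin 0 (Set.Ioi 0)) (nhds (g t * Real.pi)) := by
  obtain ⟨h1, ⟨M, h2⟩, h3⟩ := pvAux_data g hg
  have := pvAux_approxId _ _ t M h1 h2 (h3 t ht).1 integrable_inv_one_add_sq
  rw [(h3 t ht).2, integral_univ_inv_one_add_sq] at this
  refine this.congr' ?_
  filter_upwards [self_mem_nhdsWithin] with η hη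
  have hη : (0 : ℝ) < η := hη
  rw [← integral_indicator measurableSet_Ioo]
  congr 1
  ext x
  have hp := pvAux_pos (x - t) η hη
  have e : η⁻¹ * (1 + ((x - t) / η) ^ 2)⁻¹ = η / ((x - t) ^ 2 + η ^ 2) := by
    have : 1 + ((x - t) / η) ^ 2 = ((x - t) ^ 2 + η ^ 2) / η ^ 2 := by
      field_simp; ring
    rw [this]; field_simp
  rw [e]
  by_cases hx : x ∈ Set.Ioo (-1 : ℝ) 1 <;> simp [hx, indicator]

lemma pvAux_small (g : ℝ → ℝ) (hg : ContinuousOn g (Set.Icc (-1 : ℝ) 1)) (t : ℝ) :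
    Tendsto (fun η : ℝ => η * ∫ x in Set.Ioo (-1 : ℝ) 1, g x * ((x - t) / ((x - t) ^ 2 + η ^ 2)))
      (nhdsWithin 0 (Set.Ioi 0)) (nhds 0) := by
  have hgi : IntegrableOn g (Set.Ioo (-1 : ℝ) 1) :=
    (hg.integrableOn_compact isCompact_Icc).mono_set Ioo_subset_Icc_self
  simp_rw [← integral_const_mul]
  have hz : ∫ x in Set.Ioo (-1 : ℝ) 1, (0 : ℝ) = 0 := by simp
  suffices h : Tendsto (fun η : ℝ => ∫ x in Set.Ioo (-1 : ℝ) 1,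
      η * (g x * ((x - t) / ((x - t) ^ 2 + η ^ 2)))) (nhdsWithin 0 (Set.Ioi 0))
      (nhds (∫ x in Set.Ioo (-1 : ℝ) 1, (0 : ℝ))) by
    rwa [hz] at h
  apply tendsto_integral_filter_of_dominated_convergence (fun v => |g v|)
  · refine Eventually.of_forall fun η => ?_
    exact ((hgi.aestronglyMeasurable).mul
      (Measurable.aestronglyMeasurable (by fun_prop))).const_mul η
  · filter_upwards [self_mem_nhdsWithin] with η hη
    have hη : (0 : ℝ) < η := hη
    refine Eventually.of_forall fun x => ?_
    have hp := pvAux_pos (x - t) η hη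
    rw [Real.norm_eq_abs, show η * (g x * ((x - t) / ((x - t) ^ 2 + η ^ 2))) =
      g x * ((η * (x - t)) / ((x - t) ^ 2 + η ^ 2)) by ring, abs_mul]
    refine mul_le_of_le_one_right (abs_nonneg _) ?_
    rw [abs_div, abs_of_pos hp, div_le_one hp, abs_le]
    constructor <;> nlinarith [sq_nonneg (x - t - η), sq_nonneg (x - t + η), sq_nonneg (x-t)]
  · exact hgi.abs
  · refine Eventually.of_forall fun x => ?_
    by_cases hx : x - t = 0
    · simp [hx]
    · have : ContinuousAt (fun η : ℝ => η * (g x * ((x - t) / ((x - t) ^ 2 + η ^ 2)))) 0 := by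
        refine continuousAt_id.mul (continuousAt_const.mul (ContinuousAt.div continuousAt_const (by fun_prop) ?_))
        simpa using hx
      have h2 := this.tendsto
      simp only [zero_mul] at h2
      exact h2.mono_left nhdsWithin_le_nhds

lemma pvAux_pv (g : ℝ → ℝ) (hg : ContinuousOn g (Set.Icc (-1 : ℝ) 1)) (t L : ℝ)
    (ht : t ∈ Set.Ioo (-1 : ℝ) 1)
    (hL : Tendsto (fun η : ℝ => ∫ x in Set.Ioo (-1 : ℝ) 1,
      g x * ((x - t) / ((x - t) ^ 2 + η ^ 2))) (nhdsWithin 0 (Set.Ioi 0)) (nhds L)) :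
    Tendsto (fun ε : ℝ => ∫ x in Set.Ioo (-1 : ℝ) 1 \ Set.Ioo (t - ε) (t + ε), g x / (x - t))
      (nhdsWithin 0 (Set.Ioi 0)) (nhds L) := by
  obtain ⟨h1, ⟨M, h2⟩, h3⟩ := pvAux_data g hg
  have := hL.add (pvAux_approxId _ _ t M h1 h2 (h3 t ht).1 pvAuxK_integrable)
  rw [pvAuxK_integral, mul_zero, add_zero] at this
  refine this.congr' ?_
  filter_upwards [self_mem_nhdsWithin] with ε hε
  have hε : (0 : ℝ) < ε := hε
  have hc1 : Continuous (fun x : ℝ => (x - t) / ((x - t) ^ 2 + ε ^ 2)) := by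
    refine Continuous.div (by fun_prop) (by fun_prop) fun x => (pvAux_pos _ _ hε).ne'
  have hi1 : IntegrableOn (fun x => g x * ((x - t) / ((x - t) ^ 2 + ε ^ 2))) (Set.Ioo (-1 : ℝ) 1) :=
    ((hg.mul hc1.continuousOn).integrableOn_compact isCompact_Icc).mono_set Ioo_subset_Icc_self
  have hi2 : Integrable (fun x => (Set.Ioo (-1 : ℝ) 1).indicator g x * (ε⁻¹ * pvAuxK ((x - t) / ε))) := by
    refine Integrable.bdd_mul (c := M) ?_ h1.aestronglyMeasurable (Eventually.of_forall h2)
    exact ((pvAuxK_integrable.comp_div hε.ne').comp_sub_right t).const_mul _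
  rw [← integral_indicator measurableSet_Ioo, ← integral_add
    ((integrable_indicator_iff measurableSet_Ioo).2 hi1) hi2,
    ← integral_indicator (measurableSet_Ioo.diff measurableSet_Ioo)]
  congr 1
  ext x
  have hp := pvAux_pos (x - t) ε hε
  by_cases hx : x ∈ Set.Ioo (-1 : ℝ) 1
  · have hiff : x ∈ Set.Ioo (t - ε) (t + ε) ↔ |(x - t) / ε| < 1 := by
      rw [abs_div, abs_of_pos hε, div_lt_one hε, abs_lt, mem_Ioo]
      constructor <;> rintro ⟨a, b⟩ <;> constructor <;> linarith
    have e : ε⁻¹ * ((x - t) / ε / (((x - t) / ε) ^ 2 + 1)) = (x - t) / ((x - t) ^ 2 + ε ^ 2) := by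
      have : ((x - t) / ε) ^ 2 + 1 = ((x - t) ^ 2 + ε ^ 2) / ε ^ 2 := by
        field_simp
      rw [this]; field_simp
    rw [indicator_of_mem hx, indicator_of_mem hx]
    unfold pvAuxK
    by_cases hx2 : x ∈ Set.Ioo (t - ε) (t + ε)
    · rw [indicator_of_notMem (fun h => h.2 hx2), if_pos (hiff.1 hx2), mul_neg, e]
      ring
    · rw [indicator_of_mem (Set.mem_diff_of_mem hx hx2), if_neg (fun h => hx2 (hiff.2 h)), mul_sub, e,
        inv_div, div_eq_mul_inv ε, ← mul_assoc ε⁻¹, inv_mul_cancel₀ hε.ne']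
      ring
  · rw [indicator_of_notMem hx, indicator_of_notMem hx, indicator_of_notMem (fun h => hx h.1)]
    simp

lemma pvAux_sqrt (z : ℂ) : (z ^ ((1 : ℂ) / 2)) ^ 2 = z := by
  have := Complex.cpow_nat_inv_pow z (n := 2) (by norm_num)
  simpa using this

lemma pvAux_root (t : ℝ) (ht : t ∈ Set.Ioo (-1 : ℝ) 1) :
    Tendsto (fun η : ℝ => ((t + η * Complex.I : ℂ) - 1) ^ ((1 : ℂ) / 2) *
      ((t + η * Complex.I : ℂ) + 1) ^ ((1 : ℂ) / 2)) (nhdsWithin 0 (Set.Ioi 0))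
      (nhds (Real.sqrt (1 - t ^ 2) * Complex.I)) := by
  obtain ⟨ht1, ht2⟩ := ht
  have hs : Real.sqrt (1 - t ^ 2) = Real.sqrt (1 - t) * Real.sqrt (1 + t) := by
    rw [← Real.sqrt_mul (by linarith)]; congr 1; ring
  have c1 : Continuous (fun η : ℝ => (t + η * Complex.I : ℂ) - 1) := by fun_prop
  have c2 : Continuous (fun η : ℝ => (t + η * Complex.I : ℂ) + 1) := by fun_prop
  have l2 : Tendsto (fun η : ℝ => ((t + η * Complex.I : ℂ) + 1) ^ ((1 : ℂ) / 2))
      (nhdsWithin 0 (Set.Ioi 0)) (nhds (Real.sqrt (1 + t) : ℂ)) := by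
    have hsl : (t + (0:ℝ) * Complex.I : ℂ) + 1 ∈ Complex.slitPlane := by
      left; simp; linarith
    have := (c2.continuousAt (x := (0:ℝ))).cpow (continuousAt_const (y := (1:ℂ)/2)) hsl
    have h := this.tendsto.mono_left (nhdsWithin_le_nhds (s := Set.Ioi 0))
    convert h using 2
    rw [Real.sqrt_eq_rpow, Complex.ofReal_cpow (by linarith)]
    push_cast
    congr 1
    ring
  have l1 : Tendsto (fun η : ℝ => ((t + η * Complex.I : ℂ) - 1) ^ ((1 : ℂ) / 2))
      (nhdsWithin 0 (Set.Ioi 0)) (nhds (Real.sqrt (1 - t) * Complex.I : ℂ)) := by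
    have hz : Tendsto (fun η : ℝ => (t + η * Complex.I : ℂ) - 1) (nhdsWithin 0 (Set.Ioi 0))
        (nhdsWithin ((t - 1 : ℝ) : ℂ) {z : ℂ | 0 ≤ z.im}) := by
      refine tendsto_nhdsWithin_iff.2 ⟨?_, ?_⟩
      · have h := (c1.tendsto 0).mono_left (nhdsWithin_le_nhds (s := Set.Ioi 0))
        simpa using h
      · filter_upwards [self_mem_nhdsWithin] with η hη
        have hη : (0 : ℝ) < η := hη
        simp [hη.le]
    have hlog := (Complex.tendsto_log_nhdsWithin_im_nonneg_of_re_neg_of_im_zero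
      (z := ((t - 1 : ℝ) : ℂ)) (by simp; linarith) (by simp)).comp hz
    have h3 := (Complex.continuous_exp.tendsto _).comp (hlog.mul_const ((1:ℂ)/2))
    have hval : Complex.exp (((Real.log ‖((t - 1 : ℝ) : ℂ)‖ : ℝ) + Real.pi * Complex.I) * (1 / 2))
        = Real.sqrt (1 - t) * Complex.I := by
      rw [add_mul, Complex.exp_add]
      have : (Real.pi : ℂ) * Complex.I * (1 / 2) = Real.pi / 2 * Complex.I := by ring
      rw [this, Complex.exp_pi_div_two_mul_I]
      congr 1
      rw [Complex.norm_real, Real.norm_eq_abs, abs_of_neg (by linarith : t - 1 < 0),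
        Real.sqrt_eq_rpow, Real.rpow_def_of_pos (by linarith), neg_sub]
      push_cast
      rfl
    rw [hval] at h3
    refine h3.congr' ?_
    filter_upwards [self_mem_nhdsWithin] with η hη
    have hη : (0 : ℝ) < η := hη
    have hne : (t + η * Complex.I : ℂ) - 1 ≠ 0 := by
      intro h
      have := congrArg Complex.im h
      simp at this
      exact hη.ne' this
    rw [Complex.cpow_def_of_ne_zero hne]
    rfl
  have := l1.mul l2
  convert this using 2
  rw [hs]; push_cast; ring

/-- If `ρ` is a continuous probability density on `[-1,1]` whose Stieltjes
transform satisfies the equilibrium relation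
`2π √(z-1)√(z+1) ∫ ρ(x)/(x-z) dx + ∫ V'(x)√(1-x²)/(x-z) dx = -2π` for all
`z ∈ ℂ \ [-1,1]` (principal branches), then for every `t ∈ (-1,1)` the Cauchy
principal value `⨍ V'(x)√(1-x²)/(x-t) dx` equals `-2π + 2π² √(1-t²) ρ(t)`. -/
theorem pv_Vprime_eq_of_equilibrium (V ρ : ℝ → ℝ)
    (hV : ∃ U : Set ℝ, IsOpen U ∧ Set.Icc (-1 : ℝ) 1 ⊆ U ∧ ContDiffOn ℝ 1 V U)
    (hρc : ContinuousOn ρ (Set.Icc (-1 : ℝ) 1))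
    (hρ0 : ∀ x ∈ Set.Icc (-1 : ℝ) 1, 0 ≤ ρ x)
    (hρ1 : ∫ x in Set.Ioo (-1 : ℝ) 1, ρ x = 1)
    (heq : ∀ z : ℂ, z ∉ (Complex.ofReal '' Set.Icc (-1 : ℝ) 1) →
      2 * (Real.pi : ℂ) * (z - 1) ^ ((1 : ℂ) / 2) * (z + 1) ^ ((1 : ℂ) / 2) *
          (∫ x in Set.Ioo (-1 : ℝ) 1, (ρ x : ℂ) / ((x : ℂ) - z))
        + (∫ x in Set.Ioo (-1 : ℝ) 1,
            ((deriv V x * Real.sqrt (1 - x ^ 2) : ℝ) : ℂ) / ((x : ℂ) - z))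
        = -2 * (Real.pi : ℂ)) :
    ∀ t ∈ Set.Ioo (-1 : ℝ) 1,
      Tendsto
        (fun ε : ℝ =>
          ∫ x in Set.Ioo (-1 : ℝ) 1 \ Set.Ioo (t - ε) (t + ε),
            deriv V x * Real.sqrt (1 - x ^ 2) / (x - t))
        (nhdsWithin 0 (Set.Ioi 0))
        (nhds (-2 * Real.pi + 2 * Real.pi ^ 2 * Real.sqrt (1 - t ^ 2) * ρ t)) := by
  intro t ht
  obtain ⟨U, hU, hIU, hVU⟩ := hV
  have hVc : ContinuousOn (deriv V) (Set.Icc (-1 : ℝ) 1) :=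
    (hVU.continuousOn_deriv_of_isOpen hU le_rfl).mono hIU
  set f : ℝ → ℝ := fun x => deriv V x * Real.sqrt (1 - x ^ 2) with hf
  have hfc : ContinuousOn f (Set.Icc (-1 : ℝ) 1) := hVc.mul (by fun_prop)
  have hs : 0 < Real.sqrt (1 - t ^ 2) := Real.sqrt_pos.2 (by nlinarith [ht.1, ht.2])
  refine pvAux_pv f hfc t _ ht ?_
  have hR := pvAux_root t ht
  set R : ℝ → ℂ := fun η : ℝ => ((t + η * Complex.I : ℂ) - 1) ^ ((1 : ℂ) / 2) *
      ((t + η * Complex.I : ℂ) + 1) ^ ((1 : ℂ) / 2) with hRdef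
  have hRim : Tendsto (fun η => (R η).im) (nhdsWithin 0 (Set.Ioi 0))
      (nhds (Real.sqrt (1 - t ^ 2))) := by
    have := (Complex.continuous_im.tendsto _).comp hR
    simp only [Complex.re_ofReal_mul, Complex.im_ofReal_mul, Complex.I_im, mul_one] at this
    exact this
  have hsq : ∀ η, (R η).re * (R η).im = t * η := by
    intro η
    have h : R η ^ 2 = ((t + η * Complex.I : ℂ) - 1) * ((t + η * Complex.I : ℂ) + 1) := by
      rw [hRdef]; simp only [mul_pow, pvAux_sqrt]
    have := congrArg Complex.im h
    simp [sq] at this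
    linarith
  have hlim := ((((hRim.inv₀ hs.ne').const_mul t).mul (pvAux_small ρ hρc t)).sub
    (hRim.mul (pvAux_poisson ρ hρc t ht))).const_mul (2 * Real.pi)
  have hlim2 := hlim.const_sub (-2 * Real.pi)
  have hval : -2 * Real.pi - 2 * Real.pi * (t * (Real.sqrt (1 - t ^ 2))⁻¹ * 0
      - Real.sqrt (1 - t ^ 2) * (ρ t * Real.pi)) =
      -2 * Real.pi + 2 * Real.pi ^ 2 * Real.sqrt (1 - t ^ 2) * ρ t := by ring
  rw [hval] at hlim2
  refine hlim2.congr' ?_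
  filter_upwards [self_mem_nhdsWithin, hRim.eventually (lt_mem_nhds hs)] with η hη hRp
  have hη : (0 : ℝ) < η := hη
  have hE := heq (t + η * Complex.I) (by
    rintro ⟨x, -, hx⟩
    have := congrArg Complex.im hx
    simp at this
    exact hη.ne this)
  have h1 := pvAux_re_im ρ hρc t η hη
  have h2 := pvAux_re_im f hfc t η hη
  rw [h1, h2, mul_assoc (2 * (Real.pi : ℂ))] at hE
  change 2 * (Real.pi : ℂ) * R η * _ + _ = _ at hE
  have hre := congrArg Complex.re hE
  simp [-mul_eq_mul_left_iff] at hre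
  have hq : (R η).re = t * (R η).im⁻¹ * η := by
    have := hsq η
    field_simp
    linarith
  rw [hq] at hre
  linear_combination -hre
end

section
/- Let V be real analytic in a neighborhood of [-1,1]. Then for every t in (-1,1): sqrt(1-t^2) · ⨍_{-1}^{1} V(x) / ((t-x) sqrt(1-x^2)) dx = ∫_{t}^{1} (1/sqrt(1-x^2)) · ( ⨍_{-1}^{1} V'(y) sqrt(1-y^2)/(y-x) dy ) dx, where ⨍ denotes the Cauchy principal value integral. -/
open MeasureTheory Filter Set

lemma pvx_param_deriv (G G' : ℝ → ℝ → ℝ) (hG : Continuous (fun p : ℝ × ℝ => G p.1 p.2))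
    (hG' : Continuous (fun p : ℝ × ℝ => G' p.1 p.2))
    (hd : ∀ a s, HasDerivAt (fun a => G a s) (G' a s) a) (c d a : ℝ) :
    HasDerivAt (fun a => ∫ s in c..d, G a s) (∫ s in c..d, G' a s) a := by
  obtain ⟨C, hC⟩ := ((isCompact_Icc (a := a - 1) (b := a + 1)).prod
    (isCompact_uIcc (a := c) (b := d))).exists_bound_of_continuousOn hG'.continuousOn
  have h1 : ∀ x, Continuous (G x) := fun x =>
    hG.comp (by fun_prop : Continuous fun s : ℝ => ((x, s) : ℝ × ℝ))
  have h2 : ∀ x, Continuous (G' x) := fun x =>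
    hG'.comp (by fun_prop : Continuous fun s : ℝ => ((x, s) : ℝ × ℝ))
  refine (intervalIntegral.hasDerivAt_integral_of_dominated_loc_of_deriv_le
    (bound := fun _ => C) (F := G) (F' := G') (s := Icc (a - 1) (a + 1))
    (Icc_mem_nhds (by linarith) (by linarith)) ?_ ?_ ?_ ?_ ?_ ?_).2
  · exact Eventually.of_forall fun x => (h1 x).aestronglyMeasurable
  · exact (h1 a).intervalIntegrable _ _
  · exact (h2 a).aestronglyMeasurable
  · refine Eventually.of_forall fun s hs x hx => hC (x, s) ⟨hx, uIoc_subset_uIcc hs⟩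
  · exact intervalIntegrable_const
  · exact Eventually.of_forall fun s hs x hx => hd x s

noncomputable def pvxQ (D : ℝ → ℝ) (a b : ℝ) : ℝ := ∫ s in (0:ℝ)..1, D (a + s * (b - a))
noncomputable def pvxP (A : ℝ → ℝ) (a b : ℝ) : ℝ := ∫ s in (0:ℝ)..1, (1 - s) * A (a + s * (b - a))

lemma pvxQ_cont (D : ℝ → ℝ) (hD : Continuous D) :
    Continuous (fun p : ℝ × ℝ => pvxQ D p.1 p.2) := by
  unfold pvxQ
  exact intervalIntegral.continuous_parametric_intervalIntegral_of_continuous'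
    (f := fun (p : ℝ × ℝ) s => D (p.1 + s * (p.2 - p.1))) (by unfold Function.uncurry; fun_prop) _ _

lemma pvxP_cont (D : ℝ → ℝ) (hD : Continuous D) :
    Continuous (fun p : ℝ × ℝ => pvxP D p.1 p.2) := by
  unfold pvxP
  exact intervalIntegral.continuous_parametric_intervalIntegral_of_continuous'
    (f := fun (p : ℝ × ℝ) s => (1 - s) * D (p.1 + s * (p.2 - p.1)))
      (by unfold Function.uncurry; fun_prop) _ _

lemma pvxQ_symm (D : ℝ → ℝ) (a b : ℝ) : pvxQ D a b = pvxQ D b a := by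
  unfold pvxQ
  have := intervalIntegral.integral_comp_sub_left (a := 0) (b := 1)
    (fun s => D (b + s * (a - b))) (1:ℝ)
  simp only [sub_self, sub_zero] at this
  rw [← this]
  congr 1; ext s; congr 1; ring

lemma pvxQ_deriv (D A : ℝ → ℝ) (hA : Continuous A) (hD : ∀ x, HasDerivAt D (A x) x) (a b : ℝ) :
    HasDerivAt (fun a => pvxQ D a b) (pvxP A a b) a := by
  have hDc : Continuous D := continuous_iff_continuousAt.2 fun x => (hD x).continuousAt
  refine pvx_param_deriv (fun a s => D (a + s * (b - a)))
    (fun a s => (1 - s) * A (a + s * (b - a))) (by fun_prop) (by fun_prop) ?_ 0 1 a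
  intro a s
  have h : HasDerivAt (fun a : ℝ => a + s * (b - a)) (1 - s) a := by
    have := (hasDerivAt_id' a).add (((hasDerivAt_id' a).const_sub b).const_mul s)
    exact this.congr_deriv (by ring)
  have := (hD (a + s * (b - a))).comp a h
  exact this.congr_deriv (by ring)

lemma pvxQ_deriv' (D A : ℝ → ℝ) (hA : Continuous A) (hD : ∀ x, HasDerivAt D (A x) x) (a b : ℝ) :
    HasDerivAt (fun b => pvxQ D a b) (pvxP A b a) b := by
  have := pvxQ_deriv D A hA hD b a
  simpa only [pvxQ_symm D a] using this

lemma pvxQ_mul (V D : ℝ → ℝ) (hDc : Continuous D) (hV : ∀ x, HasDerivAt V (D x) x) (a b : ℝ) :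
    (b - a) * pvxQ D a b = V b - V a := by
  have h := intervalIntegral.integral_eq_sub_of_hasDerivAt (a := 0) (b := 1)
    (f := fun s => V (a + s * (b - a))) (f' := fun s => (b - a) * D (a + s * (b - a))) ?_ ?_
  · unfold pvxQ
    rw [← intervalIntegral.integral_const_mul, h]; simp
  · intro s _
    have h : HasDerivAt (fun s : ℝ => a + s * (b - a)) (b - a) s := by
      simpa using ((hasDerivAt_id' s).mul_const (b - a)).const_add a
    have := (hV (a + s * (b - a))).comp s h
    exact this.congr_deriv (by ring)
  · apply Continuous.intervalIntegrable; fun_prop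

/-- `(b-a) ∂_a Q = Q - D a` -/
lemma pvxP_mul (V D A : ℝ → ℝ) (hA : Continuous A) (hD : ∀ x, HasDerivAt D (A x) x)
    (hV : ∀ x, HasDerivAt V (D x) x) (a b : ℝ) :
    (b - a) * pvxP A a b = pvxQ D a b - D a := by
  have hDc : Continuous D := continuous_iff_continuousAt.2 fun x => (hD x).continuousAt
  have h1 := ((hasDerivAt_id' a).const_sub b).mul (pvxQ_deriv D A hA hD a b)
  have h2 : HasDerivAt (fun a => V b - V a) (- D a) a := (hV a).const_sub (V b)
  have h3 : (fun a => V b - V a) = ((fun a => b - a) * fun a => pvxQ D a b) := by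
    ext x; simp [pvxQ_mul V D hDc hV]
  rw [h3] at h2
  have := h1.unique h2
  linarith

noncomputable def pvxI (D : ℝ → ℝ) (a : ℝ) : ℝ := ∫ θ in (0:ℝ)..Real.pi, pvxQ D a (Real.cos θ)
noncomputable def pvxJ (A : ℝ → ℝ) (a : ℝ) : ℝ := ∫ θ in (0:ℝ)..Real.pi, pvxP A a (Real.cos θ)

lemma pvxI_deriv (D A : ℝ → ℝ) (hA : Continuous A) (hD : ∀ x, HasDerivAt D (A x) x) (a : ℝ) :
    HasDerivAt (pvxI D) (pvxJ A a) a := by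
  have hDc : Continuous D := continuous_iff_continuousAt.2 fun x => (hD x).continuousAt
  refine pvx_param_deriv (fun a s => pvxQ D a (Real.cos s))
    (fun a s => pvxP A a (Real.cos s)) ?_ ?_ ?_ 0 _ a
  · exact (pvxQ_cont D hDc).comp
      (by fun_prop : Continuous fun p : ℝ × ℝ => (p.1, Real.cos p.2))
  · exact (pvxP_cont A hA).comp
      (by fun_prop : Continuous fun p : ℝ × ℝ => (p.1, Real.cos p.2))
  · intro a s
    exact pvxQ_deriv D A hA hD a _

lemma pvxJ_cont (A : ℝ → ℝ) (hA : Continuous A) : Continuous (pvxJ A) := by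
  unfold pvxJ
  exact intervalIntegral.continuous_parametric_intervalIntegral_of_continuous'
    (f := fun a s => pvxP A a (Real.cos s)) ((pvxP_cont A hA).comp
      (by fun_prop : Continuous fun p : ℝ × ℝ => (p.1, Real.cos p.2))) _ _

noncomputable def pvxK (D A : ℝ → ℝ) (t y : ℝ) : ℝ :=
  -t * pvxQ D t y + (1 - t ^ 2) * pvxP A t y + ((1 - y ^ 2) * pvxP A y t - y * pvxQ D t y)

lemma pvxK_mul (V D A : ℝ → ℝ) (hA : Continuous A) (hD : ∀ x, HasDerivAt D (A x) x)
    (hV : ∀ x, HasDerivAt V (D x) x) (t y : ℝ) :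
    D y * (1 - y ^ 2) - D t * (1 - t ^ 2) = (y - t) * pvxK D A t y := by
  have h1 := pvxP_mul V D A hA hD hV t y
  have h2 := pvxP_mul V D A hA hD hV y t
  rw [pvxQ_symm D y t] at h2
  unfold pvxK
  linear_combination (-(1 - t^2)) * h1 + (1 - y^2) * h2

lemma pvxK_cont (D A : ℝ → ℝ) (hA : Continuous A) (hDc : Continuous D) (t : ℝ) :
    Continuous (pvxK D A t) := by
  have h1 : Continuous fun y => pvxQ D t y := (pvxQ_cont D hDc).comp
      (by fun_prop : Continuous fun y : ℝ => (t, y))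
  have h2 : Continuous fun y => pvxP A t y := (pvxP_cont A hA).comp
      (by fun_prop : Continuous fun y : ℝ => (t, y))
  have h3 : Continuous fun y => pvxP A y t := (pvxP_cont A hA).comp
      (by fun_prop : Continuous fun y : ℝ => (y, t))
  unfold pvxK
  fun_prop

lemma pvxK_int (D A : ℝ → ℝ) (hA : Continuous A) (hD : ∀ x, HasDerivAt D (A x) x) (t : ℝ) :
    ∫ θ in (0:ℝ)..Real.pi, pvxK D A t (Real.cos θ) = -t * pvxI D t + (1 - t ^ 2) * pvxJ A t := by
  have hDc : Continuous D := continuous_iff_continuousAt.2 fun x => (hD x).continuousAt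
  have h1 : Continuous fun y => pvxQ D t y := (pvxQ_cont D hDc).comp
      (by fun_prop : Continuous fun y : ℝ => (t, y))
  have h2 : Continuous fun y => pvxP A t y := (pvxP_cont A hA).comp
      (by fun_prop : Continuous fun y : ℝ => (t, y))
  have h3 : Continuous fun y => pvxP A y t := (pvxP_cont A hA).comp
      (by fun_prop : Continuous fun y : ℝ => (y, t))
  have hc := Real.continuous_cos
  have h1' := h1.comp hc
  have h2' := h2.comp hc
  have h3' := h3.comp hc
  simp only [Function.comp_def] at h1' h2' h3'
  have key : ∫ θ in (0:ℝ)..Real.pi, ((1 - Real.cos θ ^ 2) * pvxP A (Real.cos θ) t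
      - Real.cos θ * pvxQ D t (Real.cos θ)) = 0 := by
    rw [intervalIntegral.integral_eq_sub_of_hasDerivAt
      (f := fun θ => -(pvxQ D t (Real.cos θ) * Real.sin θ))]
    · simp
    · intro θ _
      have := (((pvxQ_deriv' D A hA hD t (Real.cos θ)).comp θ (Real.hasDerivAt_cos θ)).mul
        (Real.hasDerivAt_sin θ)).neg
      refine this.congr_deriv ?_
      have := Real.sin_sq_add_cos_sq θ
      simp only [Function.comp]
      linear_combination (pvxP A (Real.cos θ) t) * this
    · apply Continuous.intervalIntegrable; fun_prop
  unfold pvxK pvxI pvxJ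
  rw [intervalIntegral.integral_add, key, intervalIntegral.integral_add,
    intervalIntegral.integral_const_mul, intervalIntegral.integral_const_mul, add_zero]
  all_goals apply Continuous.intervalIntegrable; fun_prop

lemma pvx_w_int : IntegrableOn (fun x : ℝ => 1 / Real.sqrt (1 - x ^ 2)) (Ioo (-1) 1) := by
  have := Polynomial.Chebyshev.intervalIntegrable_sqrt_one_sub_sq_inv
  rw [intervalIntegrable_iff_integrableOn_Ioo_of_le (by norm_num)] at this
  simpa [Real.sqrt_inv] using this

lemma pvx_int_cos (k : ℝ → ℝ) :
    ∫ x in Ioo (-1 : ℝ) 1, k x * (1 / Real.sqrt (1 - x ^ 2))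
      = ∫ θ in (0:ℝ)..Real.pi, k (Real.cos θ) := by
  rw [← Polynomial.Chebyshev.integral_measureT_eq_integral_cos,
    Polynomial.Chebyshev.integral_measureT, intervalIntegral.integral_of_le (by norm_num),
    integral_Ioc_eq_integral_Ioo]
  simp [Real.sqrt_inv]

lemma pvx_T_int (t ε : ℝ) (hε : 0 < ε) :
    IntegrableOn (fun x : ℝ => 1 / ((t - x) * Real.sqrt (1 - x ^ 2)))
      (Ioo (-1) 1 \ Ioo (t - ε) (t + ε)) := by
  have hm : MeasurableSet (Ioo (-1:ℝ) 1 \ Ioo (t - ε) (t + ε)) :=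
    measurableSet_Ioo.diff measurableSet_Ioo
  refine Integrable.mono' (g := fun x => ε⁻¹ * (1 / Real.sqrt (1 - x ^ 2)))
    ((pvx_w_int.mono_set sdiff_subset).const_mul _) ?_ ?_
  · exact (by fun_prop : Measurable _).aestronglyMeasurable
  · refine (ae_restrict_iff' hm).2 (Eventually.of_forall fun x hx => ?_)
    have h1 : ε ≤ |t - x| := by
      by_contra h
      push Not at h
      rw [abs_lt] at h
      exact hx.2 ⟨by linarith, by linarith⟩
    rw [Real.norm_eq_abs, abs_div, abs_mul, abs_one, abs_of_nonneg (Real.sqrt_nonneg _), one_div,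
      mul_inv, one_div]
    gcongr

lemma pvx_F_deriv (t x : ℝ) (ht : t ∈ Ioo (-1 : ℝ) 1) (hx : x ∈ Ioo (-1 : ℝ) 1) (hne : x ≠ t) :
    HasDerivAt (fun x => (Real.log (1 - t * x + Real.sqrt (1 - t ^ 2) * Real.sqrt (1 - x ^ 2))
      - Real.log (t - x)) / Real.sqrt (1 - t ^ 2)) (1 / ((t - x) * Real.sqrt (1 - x ^ 2))) x := by
  have ht1 : 0 < 1 - t ^ 2 := by nlinarith [ht.1, ht.2]
  have hx1 : 0 < 1 - x ^ 2 := by nlinarith [hx.1, hx.2]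
  have hS := Real.sqrt_pos.2 ht1
  have hR := Real.sqrt_pos.2 hx1
  have hS2 := Real.sq_sqrt ht1.le
  have hR2 := Real.sq_sqrt hx1.le
  have h1 : HasDerivAt (fun x : ℝ => 1 - x ^ 2) (-(2 * x)) x := by
    simpa using (hasDerivAt_pow 2 x).const_sub 1
  have h2 := h1.sqrt hx1.ne'
  have h3 : HasDerivAt (fun x : ℝ => 1 - t * x) (-t) x := by
    simpa using ((hasDerivAt_id' x).const_mul t).const_sub 1
  have hN : 0 < 1 - t * x + Real.sqrt (1 - t ^ 2) * Real.sqrt (1 - x ^ 2) := by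
    have : 0 < Real.sqrt (1 - t ^ 2) * Real.sqrt (1 - x ^ 2) := by positivity
    nlinarith [sq_nonneg (t - x), sq_nonneg (t+x)]
  have h4 := (h3.add (h2.const_mul (Real.sqrt (1 - t ^ 2)))).log hN.ne'
  have h5 := ((hasDerivAt_id' x).const_sub t).log (sub_ne_zero.2 hne.symm)
  have h6 := (h4.sub h5).div_const (Real.sqrt (1 - t ^ 2))
  refine h6.congr_deriv ?_
  have h7 : t - x ≠ 0 := sub_ne_zero.2 hne.symm
  simp only [Pi.add_apply]
  generalize Real.sqrt (1 - t ^ 2) = S at *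
  generalize Real.sqrt (1 - x ^ 2) = R at *
  field_simp
  linear_combination S * hR2 - R * hS2

lemma pvx_pv0 (t : ℝ) (ht : t ∈ Ioo (-1 : ℝ) 1) :
    Tendsto (fun ε : ℝ => ∫ x in Ioo (-1 : ℝ) 1 \ Ioo (t - ε) (t + ε),
      1 / ((t - x) * Real.sqrt (1 - x ^ 2))) (nhdsWithin 0 (Ioi 0)) (nhds 0) := by
  have ht1 : 0 < 1 - t ^ 2 := by nlinarith [ht.1, ht.2]
  have hS := Real.sqrt_pos.2 ht1
  set N : ℝ → ℝ := fun x => 1 - t * x + Real.sqrt (1 - t ^ 2) * Real.sqrt (1 - x ^ 2) with hNdef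
  set F : ℝ → ℝ := fun x => (Real.log (N x) - Real.log (t - x)) / Real.sqrt (1 - t ^ 2) with hF
  have hNc : Continuous N := by fun_prop
  have hNpos : ∀ x ∈ Icc (-1:ℝ) 1, 0 < N x := by
    intro x hx
    have : 0 ≤ Real.sqrt (1 - t ^ 2) * Real.sqrt (1 - x ^ 2) := by positivity
    have : 0 < 1 - t * x := by
      have : x ^ 2 ≤ 1 := by nlinarith [hx.1, hx.2]
      nlinarith [sq_nonneg (t - x)]
    simp only [hNdef]; linarith
  have hFc : ∀ s ⊆ Icc (-1:ℝ) 1, t ∉ s → ContinuousOn F s := by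
    intro s hs hts
    refine ((hNc.continuousOn.log fun x hx => (hNpos x (hs hx)).ne').sub
      ((by fun_prop : ContinuousOn (fun x => t - x) s).log fun x hx => ?_)).div_const _
    rw [sub_ne_zero]; rintro rfl; exact hts hx
  have hlim : Tendsto (fun ε : ℝ => (Real.log (N (t - ε)) - Real.log (N (t + ε)))
      / Real.sqrt (1 - t ^ 2)) (nhdsWithin 0 (Ioi 0)) (nhds 0) := by
    have hNt := (hNpos t ⟨ht.1.le, ht.2.le⟩).ne'
    have : ContinuousAt (fun ε : ℝ => (Real.log (N (t - ε)) - Real.log (N (t + ε)))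
      / Real.sqrt (1 - t ^ 2)) 0 := by
      refine ((ContinuousAt.log (by fun_prop) (by simpa using hNt)).sub
        (ContinuousAt.log (by fun_prop) (by simpa using hNt))).div_const _
    have h := this.tendsto
    simp only [sub_zero, add_zero, sub_self, zero_div] at h
    exact h.mono_left nhdsWithin_le_nhds
  refine hlim.congr' ?_
  have hev : ∀ᶠ ε in nhdsWithin (0:ℝ) (Ioi 0), 0 < ε ∧ ε < 1 + t ∧ ε < 1 - t := by
    filter_upwards [self_mem_nhdsWithin,
      mem_nhdsWithin_of_mem_nhds (Iio_mem_nhds (show (0:ℝ) < 1 + t by linarith [ht.1])),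
      mem_nhdsWithin_of_mem_nhds (Iio_mem_nhds (show (0:ℝ) < 1 - t by linarith [ht.2]))]
      with ε h1 h2 h3 using ⟨h1, h2, h3⟩
  filter_upwards [hev] with ε ⟨h0, h1, h2⟩
  have hset : Ioo (-1 : ℝ) 1 \ Ioo (t - ε) (t + ε) = Ioc (-1) (t - ε) ∪ Ico (t + ε) 1 := by
    ext x
    simp only [Set.mem_sdiff, mem_Ioo, mem_union, mem_Ioc, mem_Ico]
    constructor
    · rintro ⟨⟨a, b⟩, c⟩
      by_cases h : x ≤ t - ε
      · exact Or.inl ⟨a, h⟩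
      · exact Or.inr ⟨by by_contra h'; exact c ⟨by linarith, by linarith⟩, b⟩
    · rintro (⟨a, b⟩ | ⟨a, b⟩)
      · exact ⟨⟨a, by linarith⟩, fun h => by linarith [h.1]⟩
      · exact ⟨⟨by linarith, b⟩, fun h => by linarith [h.2]⟩
  have hI := pvx_T_int t ε h0
  rw [hset] at hI ⊢
  have hIa := hI.mono_set subset_union_left
  have hIb := hI.mono_set subset_union_right
  rw [setIntegral_union ?_ measurableSet_Ico hIa hIb]
  · rw [integral_Ico_eq_integral_Ioo, ← integral_Ioc_eq_integral_Ioo,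
      ← intervalIntegral.integral_of_le (by linarith),
      ← intervalIntegral.integral_of_le (by linarith),
      intervalIntegral.integral_eq_sub_of_hasDerivAt_of_le (f := F) (by linarith),
      intervalIntegral.integral_eq_sub_of_hasDerivAt_of_le (f := F) (by linarith)]
    · have e1 : F 1 = 0 := by
        simp only [hF, hNdef]
        rw [← Real.log_neg_eq_log (t - 1)]; norm_num
      have e2 : F (-1) = 0 := by
        simp only [hF, hNdef]
        norm_num [add_comm]
      rw [e1, e2]
      simp only [hF]
      rw [show t - (t + ε) = -(t - (t - ε)) by ring, Real.log_neg_eq_log]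
      ring
    · exact hFc _ (Icc_subset_Icc (by linarith) le_rfl) (fun h => by linarith [h.1])
    · intro x hx
      exact pvx_F_deriv t x ht ⟨by linarith [hx.1], hx.2⟩ (by linarith [hx.1] : t < x).ne'
    · rw [intervalIntegrable_iff_integrableOn_Ico_of_le (by linarith)]; exact hIb
    · exact hFc _ (Icc_subset_Icc le_rfl (by linarith)) (fun h => by linarith [h.2])
    · intro x hx
      exact pvx_F_deriv t x ht ⟨hx.1, by linarith [hx.2]⟩ (by linarith [hx.2] : x < t).ne
    · rw [intervalIntegrable_iff_integrableOn_Ioc_of_le (by linarith)]; exact hIa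
  · rw [Set.disjoint_left]
    intro x hx hx'
    linarith [hx.2, hx'.1]

lemma pvx_pv (f k : ℝ → ℝ) (t : ℝ) (ht : t ∈ Ioo (-1 : ℝ) 1) (hk : Continuous k)
    (hfk : ∀ y, f y - f t = (y - t) * k y) :
    Tendsto (fun ε : ℝ => ∫ x in Ioo (-1 : ℝ) 1 \ Ioo (t - ε) (t + ε),
      f x / ((t - x) * Real.sqrt (1 - x ^ 2))) (nhdsWithin 0 (Ioi 0))
      (nhds (-∫ θ in (0:ℝ)..Real.pi, k (Real.cos θ))) := by
  have hkw : IntegrableOn (fun x => k x * (1 / Real.sqrt (1 - x ^ 2))) (Ioo (-1) 1) := by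
    obtain ⟨C, hC⟩ := (isCompact_Icc (a := (-1:ℝ)) (b := 1)).exists_bound_of_continuousOn
      hk.continuousOn
    refine Integrable.bdd_mul (c := C) pvx_w_int hk.aestronglyMeasurable ?_
    exact (ae_restrict_iff' measurableSet_Ioo).2
      (Eventually.of_forall fun x hx => hC x (Ioo_subset_Icc_self hx))
  have hm : ∀ ε : ℝ, MeasurableSet (Ioo (-1:ℝ) 1 \ Ioo (t - ε) (t + ε)) := fun ε =>
    measurableSet_Ioo.diff measurableSet_Ioo
  have hlim2 : Tendsto (fun ε : ℝ => ∫ x in Ioo (-1 : ℝ) 1 \ Ioo (t - ε) (t + ε),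
      k x * (1 / Real.sqrt (1 - x ^ 2))) (nhdsWithin 0 (Ioi 0))
      (nhds (∫ x in Ioo (-1 : ℝ) 1, k x * (1 / Real.sqrt (1 - x ^ 2)))) := by
    simp_rw [← integral_indicator (hm _), ← integral_indicator (measurableSet_Ioo)]
    have hkw' := (integrable_indicator_iff measurableSet_Ioo).2 hkw
    refine tendsto_integral_filter_of_dominated_convergence
      (fun x => ‖(Ioo (-1:ℝ) 1).indicator (fun x => k x * (1 / Real.sqrt (1 - x ^ 2))) x‖)
      ?_ ?_ hkw'.norm ?_
    · exact Eventually.of_forall fun ε => (Measurable.indicator (by fun_prop) (hm ε)).aestronglyMeasurable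
    · refine Eventually.of_forall fun ε => Eventually.of_forall fun x => ?_
      exact norm_indicator_le_of_subset sdiff_subset _ _
    · have : ∀ᵐ x : ℝ, x ≠ t := Measure.ae_ne volume t
      filter_upwards [this] with x hx
      refine tendsto_const_nhds.congr' ?_
      have : (0:ℝ) < |x - t| := abs_pos.2 (sub_ne_zero.2 hx)
      filter_upwards [mem_nhdsWithin_of_mem_nhds (Iio_mem_nhds this)] with ε hε
      have : x ∉ Ioo (t - ε) (t + ε) := by
        intro h
        have : |x - t| < ε := abs_lt.2 ⟨by linarith [h.1], by linarith [h.2]⟩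
        exact lt_asymm this hε
      by_cases h : x ∈ Ioo (-1:ℝ) 1
      · rw [indicator_of_mem h, indicator_of_mem (show x ∈ Ioo (-1:ℝ) 1 \ Ioo (t - ε) (t + ε) from ⟨h, this⟩)]
      · rw [indicator_of_notMem h, indicator_of_notMem (fun h' => h h'.1)]
  have h := ((pvx_pv0 t ht).const_mul (f t)).sub hlim2
  rw [mul_zero, zero_sub, pvx_int_cos] at h
  refine h.congr' ?_
  filter_upwards [self_mem_nhdsWithin] with ε hε
  rw [← integral_const_mul, ← integral_sub ((pvx_T_int t ε hε).const_mul _)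
    (hkw.mono_set sdiff_subset)]
  refine setIntegral_congr_fun (hm ε) fun x hx => ?_
  have hxt : t - x ≠ 0 := by
    rw [sub_ne_zero]; rintro rfl
    exact hx.2 ⟨by linarith [mem_Ioi.1 hε], by linarith [mem_Ioi.1 hε]⟩
  have hR : Real.sqrt (1 - x ^ 2) ≠ 0 :=
    (Real.sqrt_pos.2 (by nlinarith [hx.1.1, hx.1.2])).ne'
  have e : f x = f t + (x - t) * k x := by linarith [hfk x]
  simp only [e]
  field_simp
  ring

lemma pvx_main (V D A : ℝ → ℝ) (hA : Continuous A) (hD : ∀ x, HasDerivAt D (A x) x)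
    (hV : ∀ x, HasDerivAt V (D x) x) (t : ℝ) (ht : t ∈ Set.Ioo (-1 : ℝ) 1) :
    ∃ (L : ℝ) (g : ℝ → ℝ),
      Tendsto
        (fun ε : ℝ =>
          ∫ x in Set.Ioo (-1 : ℝ) 1 \ Set.Ioo (t - ε) (t + ε),
            V x / ((t - x) * Real.sqrt (1 - x ^ 2)))
        (nhdsWithin 0 (Set.Ioi 0)) (nhds L) ∧
      (∀ x ∈ Set.Ioo (-1 : ℝ) 1,
        Tendsto
          (fun ε : ℝ =>
            ∫ y in Set.Ioo (-1 : ℝ) 1 \ Set.Ioo (x - ε) (x + ε),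
              D y * Real.sqrt (1 - y ^ 2) / (y - x))
          (nhdsWithin 0 (Set.Ioi 0)) (nhds (g x))) ∧
      Real.sqrt (1 - t ^ 2) * L
        = ∫ x in Set.Ioo t 1, g x / Real.sqrt (1 - x ^ 2) := by
  have hDc : Continuous D := continuous_iff_continuousAt.2 fun x => (hD x).continuousAt
  refine ⟨-pvxI D t, fun x => -x * pvxI D x + (1 - x ^ 2) * pvxJ A x, ?_, ?_, ?_⟩
  · exact pvx_pv V (pvxQ D t) t ht ((pvxQ_cont D hDc).comp
      (by fun_prop : Continuous fun y : ℝ => (t, y))) fun y => (pvxQ_mul V D hDc hV t y).symm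
  · intro x hx
    have h := (pvx_pv (fun y => D y * (1 - y ^ 2)) (pvxK D A x) x hx (pvxK_cont D A hA hDc x)
      (pvxK_mul V D A hA hD hV x)).neg
    rw [pvxK_int D A hA hD, neg_neg] at h
    refine h.congr fun ε => ?_
    rw [← integral_neg]
    refine setIntegral_congr_fun (measurableSet_Ioo.diff measurableSet_Ioo) fun y hy => ?_
    have hy1 : 0 < 1 - y ^ 2 := by nlinarith [hy.1.1, hy.1.2]
    have hR := Real.sqrt_pos.2 hy1
    have hR2 := Real.sq_sqrt hy1.le
    beta_reduce
    generalize Real.sqrt (1 - y ^ 2) = R at *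
    rw [← hR2]
    rcases eq_or_ne y x with rfl | hne
    · simp
    · have h1 : y - x ≠ 0 := sub_ne_zero.2 hne
      have h2 : x - y ≠ 0 := sub_ne_zero.2 hne.symm
      field_simp
      ring
  · have hIc : Continuous (pvxI D) :=
      continuous_iff_continuousAt.2 fun x => (pvxI_deriv D A hA hD x).continuousAt
    have hJc := pvxJ_cont A hA
    rw [← integral_Ioc_eq_integral_Ioo, ← intervalIntegral.integral_of_le ht.2.le,
      intervalIntegral.integral_eq_sub_of_hasDerivAt_of_le
        (f := fun x => Real.sqrt (1 - x ^ 2) * pvxI D x) ht.2.le]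
    · simp
    · fun_prop
    · intro x hx
      have hx1 : 0 < 1 - x ^ 2 := by nlinarith [hx.1, hx.2, ht.1]
      have hR := Real.sqrt_pos.2 hx1
      have hR2 := Real.sq_sqrt hx1.le
      have h1 : HasDerivAt (fun x : ℝ => 1 - x ^ 2) (-(2 * x)) x := by
        simpa using (hasDerivAt_pow 2 x).const_sub 1
      refine ((h1.sqrt hx1.ne').mul (pvxI_deriv D A hA hD x)).congr_deriv ?_
      generalize Real.sqrt (1 - x ^ 2) = R at *
      beta_reduce
      rw [← hR2]
      field_simp
    · rw [intervalIntegrable_iff_integrableOn_Ioo_of_le ht.2.le]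
      have hg : Continuous fun x => -x * pvxI D x + (1 - x ^ 2) * pvxJ A x := by fun_prop
      obtain ⟨C, hC⟩ := (isCompact_Icc (a := (-1:ℝ)) (b := 1)).exists_bound_of_continuousOn
        hg.continuousOn
      have : IntegrableOn (fun x => (-x * pvxI D x + (1 - x ^ 2) * pvxJ A x)
          * (1 / Real.sqrt (1 - x ^ 2))) (Ioo (-1) 1) := by
        refine Integrable.bdd_mul (c := C) pvx_w_int hg.aestronglyMeasurable ?_
        exact (ae_restrict_iff' measurableSet_Ioo).2
          (Eventually.of_forall fun x hx => hC x (Ioo_subset_Icc_self hx))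
      simp only [mul_one_div] at this
      exact this.mono_set (Ioo_subset_Ioo ht.1.le le_rfl)

lemma pvx_extend (V : ℝ → ℝ)
    (hV : ∃ U : Set ℝ, IsOpen U ∧ Set.Icc (-1 : ℝ) 1 ⊆ U ∧ AnalyticOnNhd ℝ V U) :
    ∃ W D A : ℝ → ℝ, Continuous A ∧ (∀ x, HasDerivAt D (A x) x) ∧ (∀ x, HasDerivAt W (D x) x) ∧
      (∀ x ∈ Icc (-1 : ℝ) 1, V x = W x) ∧ (∀ x ∈ Icc (-1 : ℝ) 1, deriv V x = D x) := by
  obtain ⟨U, hU, hsub, han⟩ := hV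
  have h1 := han.deriv
  have h2 := h1.deriv
  set A : ℝ → ℝ := IccExtend (show (-1:ℝ) ≤ 1 by norm_num)
    ((Icc (-1:ℝ) 1).domRestrict (deriv (deriv V))) with hAdef
  have hA : Continuous A :=
    (continuousOn_iff_continuous_domRestrict.1 (h2.continuousOn.mono hsub)).Icc_extend'
  have hAe : ∀ x ∈ Icc (-1:ℝ) 1, A x = deriv (deriv V) x := by
    intro x hx; rw [hAdef, IccExtend_of_mem _ _ hx]; rfl
  have huI : ∀ x ∈ Icc (-1:ℝ) 1, uIcc 0 x ⊆ Icc (-1:ℝ) 1 := fun x hx =>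
    uIcc_subset_Icc (by norm_num) hx
  have gen : ∀ f : ℝ → ℝ, AnalyticOnNhd ℝ f U → ∀ B : ℝ → ℝ,
      (∀ x ∈ Icc (-1:ℝ) 1, B x = deriv f x) → ∀ x ∈ Icc (-1:ℝ) 1,
      f x = f 0 + ∫ s in (0:ℝ)..x, B s := by
    intro f hf B hB x hx
    rw [intervalIntegral.integral_congr (g := deriv f) fun s hs => hB s (huI x hx hs),
      intervalIntegral.integral_eq_sub_of_hasDerivAt (f := f)]
    · ring
    · intro s hs
      exact (hf s (hsub (huI x hx hs))).differentiableAt.hasDerivAt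
    · exact (hf.deriv.continuousOn.mono ((huI x hx).trans hsub)).intervalIntegrable
  have der : ∀ (c : ℝ) (B : ℝ → ℝ), Continuous B → ∀ x,
      HasDerivAt (fun x => c + ∫ s in (0:ℝ)..x, B s) (B x) x := by
    intro c B hB x
    exact (intervalIntegral.integral_hasDerivAt_right (hB.intervalIntegrable _ _)
      (hB.stronglyMeasurableAtFilter _ _) hB.continuousAt).const_add c
  have hDd := der (deriv V 0) A hA
  have hDe := gen (deriv V) h1 A hAe
  have hDc : Continuous (fun x => deriv V 0 + ∫ s in (0:ℝ)..x, A s) :=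
    continuous_iff_continuousAt.2 fun x => (hDd x).continuousAt
  exact ⟨_, _, A, hA, hDd, der (V 0) _ hDc, gen V han _ fun x hx => (hDe x hx).symm, hDe⟩

/-- For `V` real analytic in a neighborhood of `[-1,1]` and `t ∈ (-1,1)`,
`√(1-t²) ⨍ V(x)/((t-x)√(1-x²)) dx
  = ∫_t^1 (1/√(1-x²)) ( ⨍ V'(y)√(1-y²)/(y-x) dy ) dx`,
where `⨍` denotes the Cauchy principal value: both principal values exist (with
the inner one defining a function `g`), and the stated equality holds. -/
theorem pv_identity_V (V : ℝ → ℝ)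
    (hV : ∃ U : Set ℝ, IsOpen U ∧ Set.Icc (-1 : ℝ) 1 ⊆ U ∧ AnalyticOnNhd ℝ V U)
    (t : ℝ) (ht : t ∈ Set.Ioo (-1 : ℝ) 1) :
    ∃ (L : ℝ) (g : ℝ → ℝ),
      Tendsto
        (fun ε : ℝ =>
          ∫ x in Set.Ioo (-1 : ℝ) 1 \ Set.Ioo (t - ε) (t + ε),
            V x / ((t - x) * Real.sqrt (1 - x ^ 2)))
        (nhdsWithin 0 (Set.Ioi 0)) (nhds L) ∧
      (∀ x ∈ Set.Ioo (-1 : ℝ) 1,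
        Tendsto
          (fun ε : ℝ =>
            ∫ y in Set.Ioo (-1 : ℝ) 1 \ Set.Ioo (x - ε) (x + ε),
              deriv V y * Real.sqrt (1 - y ^ 2) / (y - x))
          (nhdsWithin 0 (Set.Ioi 0)) (nhds (g x))) ∧
      Real.sqrt (1 - t ^ 2) * L
        = ∫ x in Set.Ioo t 1, g x / Real.sqrt (1 - x ^ 2) := by
  obtain ⟨W, D, A, hA, hD, hW, e1, e2⟩ := pvx_extend V hV
  obtain ⟨L, g, h1, h2, h3⟩ := pvx_main W D A hA hD hW t ht
  refine ⟨L, g, h1.congr fun ε => ?_, fun x hx => (h2 x hx).congr fun ε => ?_, h3⟩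
  · refine setIntegral_congr_fun (measurableSet_Ioo.diff measurableSet_Ioo) fun y hy => ?_
    simp only [e1 y (Ioo_subset_Icc_self hy.1)]
  · refine setIntegral_congr_fun (measurableSet_Ioo.diff measurableSet_Ioo) fun y hy => ?_
    simp only [e2 y (Ioo_subset_Icc_self hy.1)]
end
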